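/- arXiv:cs/0311011 — 2 statements merged into one kernel-verified Lean document; each statement's English description precedes it below -/
import Mathlib

section
/- Let α ∈ (0,1) be real and let P_m(α) := Σ_{k=0}^m C(α,k). Then for every integer m ≥ 1 the value 2^α lies strictly between P_m(α) and P_{m+1}(α); that is, (P_m(α) − 2^α)·(P_{m+1}(α) − 2^α) < 0. -/
/-- The generalized binomial coefficient `C(α,k) = α(α−1)⋯(α−k+1)/k!`. -/
noncomputable def genBinom (α : ℝ) (k : ℕ) : ℝ :=
  (∏ i ∈ Finset.range k, (α - i)) / (Nat.factorial k)

/-- The partial sum `P_m(α) = ∑_{k=0}^m C(α,k)`. -/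
noncomputable def partialSum (α : ℝ) (m : ℕ) : ℝ :=
  ∑ k ∈ Finset.range (m + 1), genBinom α k

theorem gb_succ (b : ℝ) (k : ℕ) : genBinom b (k + 1) * (k + 1) = b * genBinom (b - 1) k := by
  have hk : ((k.factorial : ℕ) : ℝ) ≠ 0 := by exact_mod_cast k.factorial_ne_zero
  have hk1 : (k : ℝ) + 1 ≠ 0 := by positivity
  have e : ∏ i ∈ Finset.range k, (b - ((i + 1 : ℕ) : ℝ)) = ∏ i ∈ Finset.range k, (b - 1 - (i : ℝ)) :=
    Finset.prod_congr rfl fun i _ => by push_cast; ring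
  unfold genBinom
  rw [Finset.prod_range_succ', e, Nat.factorial_succ]
  push_cast
  field_simp
  ring

theorem gb_step (b : ℝ) (k : ℕ) : genBinom b (k + 1) * (k + 1) = genBinom b k * (b - k) := by
  have hk : ((k.factorial : ℕ) : ℝ) ≠ 0 := by exact_mod_cast k.factorial_ne_zero
  have hk1 : (k : ℝ) + 1 ≠ 0 := by positivity
  unfold genBinom
  rw [Finset.prod_range_succ, Nat.factorial_succ]
  push_cast
  field_simp

theorem gb_zero (b : ℝ) : genBinom b 0 = 1 := by simp [genBinom]

noncomputable def remG (b : ℝ) (m : ℕ) (x : ℝ) : ℝ :=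
  (1 + x) ^ b - ∑ k ∈ Finset.range (m + 1), genBinom b k * x ^ k

theorem remG_zero (b : ℝ) (m : ℕ) : remG b m 0 = 0 := by
  simp [remG, Finset.sum_range_succ', gb_zero]

theorem remG_deriv (b : ℝ) (m : ℕ) (x : ℝ) (hx : 0 ≤ x) :
    HasDerivAt (remG b (m + 1)) (b * remG (b - 1) m x) x := by
  have h1 : HasDerivAt (fun x : ℝ => (1 + x) ^ b) (1 * b * (1 + x) ^ (b - 1)) x :=
    ((hasDerivAt_id x).const_add 1).rpow_const (Or.inl (by simp only [id]; positivity))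
  have h2 : HasDerivAt (fun x : ℝ => ∑ k ∈ Finset.range (m + 1 + 1), genBinom b k * x ^ k)
      (∑ k ∈ Finset.range (m + 1 + 1), genBinom b k * (k * x ^ (k - 1))) x :=
    HasDerivAt.fun_sum fun k _ => (hasDerivAt_pow k x).const_mul _
  have h3 := h1.sub h2
  refine HasDerivAt.congr_deriv (f := remG b (m + 1)) h3 ?_
  symm
  rw [Finset.sum_range_succ']
  unfold remG
  rw [mul_sub, Finset.mul_sum]
  simp only [Nat.cast_zero, zero_mul, mul_zero, add_zero, one_mul]
  congr 1
  refine Finset.sum_congr rfl fun k _ => ?_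
  rw [← mul_assoc, ← gb_succ]
  push_cast
  ring

theorem remG_sign (m : ℕ) : ∀ b : ℝ, (∀ n : ℕ, b ≠ n) → ∀ x : ℝ, 0 < x →
    0 < genBinom b (m + 1) * remG b m x := by
  induction m with
  | zero =>
    intro b hb x hx
    have e : genBinom b (0 + 1) = b := by simp [genBinom]
    rw [e]
    simp only [remG, zero_add, Finset.sum_range_one, gb_zero, pow_zero, mul_one]
    have hb0 : b ≠ 0 := by simpa using hb 0
    rcases lt_or_gt_of_ne hb0 with h | h
    · exact mul_pos_of_neg_of_neg h
        (by linarith [Real.rpow_lt_one_of_one_lt_of_neg (by linarith : 1 < 1 + x) h])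
    · exact mul_pos h (by linarith [Real.one_lt_rpow (by linarith : 1 < 1 + x) h])
  | succ m ih =>
    intro b hb x hx
    have hb0 : b ≠ 0 := by simpa using hb 0
    have hb' : ∀ n : ℕ, b - 1 ≠ n := fun n h => hb (n + 1) (by push_cast; linarith)
    have hd : ∀ y : ℝ, 0 ≤ y → HasDerivAt (fun y => genBinom b (m + 1 + 1) * remG b (m + 1) y)
        (genBinom b (m + 1 + 1) * (b * remG (b - 1) m y)) y :=
      fun y hy => (remG_deriv b m y hy).const_mul _
    have hmono : StrictMonoOn (fun y => genBinom b (m + 1 + 1) * remG b (m + 1) y)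
        (Set.Ici 0) := by
      refine strictMonoOn_of_deriv_pos (convex_Ici 0)
        (fun y hy => (hd y hy).continuousAt.continuousWithinAt) fun y hy => ?_
      rw [interior_Ici] at hy
      rw [(hd y (le_of_lt hy)).deriv]
      have h1 := ih (b - 1) hb' y hy
      have h2 := gb_succ b (m + 1)
      have h3 : (0 : ℝ) < ((m + 1 : ℕ) : ℝ) + 1 := by positivity
      have h4 : 0 < b ^ 2 := by positivity
      refine pos_of_mul_pos_left (b := ((m + 1 : ℕ) : ℝ) + 1) ?_ h3.le
      have h5 : genBinom b (m + 1 + 1) * (b * remG (b - 1) m y) * (((m + 1 : ℕ) : ℝ) + 1)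
          = b ^ 2 * (genBinom (b - 1) (m + 1) * remG (b - 1) m y) := by
        linear_combination (b * remG (b - 1) m y) * h2
      rw [h5]
      exact mul_pos h4 h1
    have := hmono (Set.mem_Ici.2 le_rfl) (Set.mem_Ici.2 hx.le) hx
    simpa [remG_zero] using this

theorem stmt_7 (α : ℝ) (h0 : 0 < α) (h1 : α < 1) :
    ∀ m : ℕ, 1 ≤ m →
      (partialSum α m - (2 : ℝ) ^ α) * (partialSum α (m + 1) - (2 : ℝ) ^ α) < 0 := by
  intro m hm
  have hb : ∀ n : ℕ, α ≠ n := by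
    intro n h
    rw [h] at h0 h1
    have a : 0 < n := by exact_mod_cast h0
    have b : n < 1 := by exact_mod_cast h1
    omega
  have e : ∀ m, remG α m 1 = -(partialSum α m - (2 : ℝ) ^ α) := by
    intro m
    simp only [remG, partialSum, one_pow, mul_one]
    norm_num
  have s1 := remG_sign m α hb 1 one_pos
  have s2 := remG_sign (m + 1) α hb 1 one_pos
  have s3 := gb_step α (m + 1)
  rw [e] at s1 s2
  push_cast at s3
  generalize partialSum α m - (2 : ℝ) ^ α = A at *
  generalize partialSum α (m + 1) - (2 : ℝ) ^ α = B at *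
  generalize genBinom α (m + 1) = c at *
  generalize genBinom α (m + 1 + 1) = d at *
  have hm0 : (0 : ℝ) ≤ m := by positivity
  have hc : c ≠ 0 := by rintro rfl; simp at s1
  have hc2 : 0 < c ^ 2 := by positivity
  by_contra! hAB
  have h := mul_pos s1 s2
  have h6 : c * -A * (d * -B) * ((m : ℝ) + 1 + 1) = c ^ 2 * (A * B) * (α - (m + 1)) := by
    linear_combination (c * A * B) * s3
  have h7 : 0 < c * -A * (d * -B) * ((m : ℝ) + 1 + 1) := mul_pos h (by positivity)
  have h8 : c ^ 2 * (A * B) * (α - (m + 1)) ≤ 0 :=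
    mul_nonpos_of_nonneg_of_nonpos (by positivity) (by linarith)
  linarith
end

section
/- Let α ∈ (0,1), let ω_k := (−1)^k C(α,k), let S and θ be real, and let m be a nonnegative integer. Consider the mode ζ_n = (−1)^n (amplification factor ξ = −1). Then the von Neumann recurrence ζ_{m+1} = ζ_m − 4S sin²(θ) Σ_{k=0}^m ω_k ζ_{m−k} holds at step m if and only if S sin²(θ) = 1/(2 Σ_{k=0}^m C(α,k)). -/
theorem genBinom_succ (α : ℝ) (k : ℕ) :
    genBinom α (k + 1) = genBinom α k * ((α - k) / (k + 1)) := by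
  have h : (Nat.factorial k : ℝ) ≠ 0 := by positivity
  have h' : (k : ℝ) + 1 ≠ 0 := by positivity
  unfold genBinom
  rw [Finset.prod_range_succ, Nat.factorial_succ]
  push_cast
  field_simp

theorem genBinom_aux (α : ℝ) (h0 : 0 < α) (h1 : α < 1) (j : ℕ) :
    1 ≤ ∑ k ∈ Finset.range (2 * j + 1), genBinom α k ∧ 0 ≤ genBinom α (2 * j + 1) := by
  induction j with
  | zero => simp [genBinom, h0.le]
  | succ j ih =>
    obtain ⟨ih1, ih2⟩ := ih
    have hj : (0 : ℝ) ≤ j := by positivity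
    have e2 := genBinom_succ α (2 * j + 1)
    have e3 := genBinom_succ α (2 * j + 1 + 1)
    push_cast at e2 e3
    have r1 : -1 ≤ (α - (2 * (j : ℝ) + 1)) / (2 * (j : ℝ) + 1 + 1) := by
      rw [le_div_iff₀ (by positivity)]; linarith
    have r1' : (α - (2 * (j : ℝ) + 1)) / (2 * (j : ℝ) + 1 + 1) ≤ 0 :=
      div_nonpos_of_nonpos_of_nonneg (by linarith) (by positivity)
    have r2 : (α - (2 * (j : ℝ) + 1 + 1)) / (2 * (j : ℝ) + 1 + 1 + 1) ≤ 0 :=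
      div_nonpos_of_nonpos_of_nonneg (by linarith) (by positivity)
    have ee : 2 * (j + 1) + 1 = 2 * j + 1 + 1 + 1 := by ring
    rw [ee]
    constructor
    · rw [Finset.sum_range_succ, Finset.sum_range_succ, e2]
      nlinarith
    · rw [e3, e2]
      exact mul_nonneg_of_nonpos_of_nonpos (mul_nonpos_of_nonneg_of_nonpos ih2 r1') r2

theorem genBinom_sum_pos (α : ℝ) (h0 : 0 < α) (h1 : α < 1) (m : ℕ) :
    0 < ∑ k ∈ Finset.range (m + 1), genBinom α k := by
  rcases Nat.even_or_odd' m with ⟨j, rfl | rfl⟩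
  · linarith [(genBinom_aux α h0 h1 j).1]
  · rw [Finset.sum_range_succ]
    linarith [(genBinom_aux α h0 h1 j).1, (genBinom_aux α h0 h1 j).2]

theorem stmt_11 (α : ℝ) (h0 : 0 < α) (h1 : α < 1) (S θ : ℝ) (m : ℕ)
    (ω : ℕ → ℝ) (hω : ∀ k : ℕ, ω k = (-1) ^ k * genBinom α k)
    (ζ : ℕ → ℝ) (hζ : ∀ n : ℕ, ζ n = (-1) ^ n) :
    (ζ (m + 1) = ζ m - 4 * S * Real.sin θ ^ 2 *
        ∑ k ∈ Finset.range (m + 1), ω k * ζ (m - k)) ↔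
    S * Real.sin θ ^ 2 = 1 / (2 * ∑ k ∈ Finset.range (m + 1), genBinom α k) := by
  have hs := genBinom_sum_pos α h0 h1 m
  have e : ∑ k ∈ Finset.range (m + 1), ω k * ζ (m - k)
      = (-1) ^ m * ∑ k ∈ Finset.range (m + 1), genBinom α k := by
    rw [Finset.mul_sum]
    refine Finset.sum_congr rfl fun k hk => ?_
    have hk' : k + (m - k) = m := by
      have := Finset.mem_range.1 hk
      omega
    have : (-1 : ℝ) ^ m = (-1) ^ k * (-1) ^ (m - k) := by rw [← pow_add, hk']
    rw [hω, hζ, this]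
    ring
  rw [e, hζ, hζ, eq_div_iff (by positivity)]
  generalize ∑ k ∈ Finset.range (m + 1), genBinom α k = s
  rw [pow_succ]
  rcases neg_one_pow_eq_or ℝ m with h | h <;> rw [h] <;>
    constructor <;> intro h <;> linarith
end
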